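/- (Dirichlet half-line model problem.) Let a > 0, let κ satisfy 0 < κ ≤ 1/a, let k be a nonnegative integer, let G ∈ ℝ, and let F ∈ ℰ(κ). Then there exists U ∈ ℰ(κ) such that a U''(ν) + 2ν U'(ν) − 2k U(ν) = −4 F(ν) for all ν ≥ 0 and U(0) = G. Equivalently, u(ν,t) := t^{k/2} U(ν/(2√t)) satisfies (∂_t − a ∂_ν²) u = t^{k/2−1} F(ν/(2√t)) for ν ≥ 0, t > 0, with boundary value u(0,t) = t^{k/2} G. -/

import Mathlib

open Real

/-- The class `ℰ(κ)`: smooth functions on `[0,∞)` (realized as smooth functions on `ℝ`)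
all of whose derivatives satisfy Gaussian decay estimates
`|U^{(j)}(τ)| ≤ C_{j,κ′} exp(−κ′ τ²)` on `[0,∞)` for every `0 < κ′ < κ`. -/
def MemGaussianClass (κ : ℝ) (U : ℝ → ℝ) : Prop :=
  ContDiff ℝ (⊤ : ℕ∞) U ∧
    ∀ (j : ℕ) (κ' : ℝ), 0 < κ' → κ' < κ →
      ∃ C : ℝ, ∀ τ : ℝ, 0 ≤ τ →
        |iteratedDeriv j U τ| ≤ C * Real.exp (-κ' * τ ^ 2)

/-!
Put `L μ U = a U'' + 2 x U' - 2 μ U`. Since `(L (μ + 1) U)' = L μ U'`, and since every element of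
`ℰ(κ)` is the derivative of exactly one element of `ℰ(κ)`, the equation `L (μ + 1) U = F` is
equivalent to `L μ U' = F'`. Under this correspondence the Dirichlet and Neumann conditions at `0`
are exchanged: `U' 0` is the value at `0` of the new unknown `U'`, while the equation at `0` reads
`a U'' 0 - 2 (μ + 1) U 0 = F 0`, so prescribing `U 0` amounts to prescribing the derivative of `U'`
at `0`. Hence both problems for `μ = k` follow by simultaneous induction from those for `μ = 0`,
where the equation is first order in `U'` and is solved with the integrating factor `exp (x² / a)`.
-/

open Filter Topology MeasureTheory Asymptotics
open scoped ContDiff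

section Calculus

variable {𝕜 E : Type*} [NontriviallyNormedField 𝕜] [NormedAddCommGroup E]

lemma contDiff_infty_of_hasDerivAt [NormedSpace 𝕜 E] {f g : 𝕜 → E}
    (hf : ∀ x, HasDerivAt f (g x) x) (hg : ContDiff 𝕜 ∞ g) : ContDiff 𝕜 ∞ f := by
  refine contDiff_infty_iff_deriv.2 ⟨fun x => (hf x).differentiableAt, ?_⟩
  rwa [funext fun x => (hf x).deriv]

lemma eq_of_deriv_eq_of_tendsto_atTop [NormedSpace ℝ E] {f g : ℝ → E} {l : E}
    (hf : Differentiable ℝ f) (hg : Differentiable ℝ g) (h : deriv f = deriv g)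
    (hfl : Tendsto f atTop (𝓝 l)) (hgl : Tendsto g atTop (𝓝 l)) : f = g := by
  have hderiv : ∀ x, deriv (f - g) x = 0 := fun x => by
    rw [deriv_sub (hf x) (hg x), h, sub_self]
  funext x
  have hconst : f - g = fun _ => f x - g x :=
    funext fun y => is_const_of_deriv_eq_zero (hf.sub hg) hderiv y x
  have hlim : Tendsto (f - g) atTop (𝓝 (l - l)) := hfl.sub hgl
  rw [hconst, sub_self] at hlim
  exact sub_eq_zero.1 (tendsto_nhds_unique tendsto_const_nhds hlim)

lemma iteratedDeriv_succ_id_mul {f : 𝕜 → 𝕜} (hf : ContDiff 𝕜 ∞ f) (n : ℕ) :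
    iteratedDeriv (n + 1) (fun x => x * f x) =
      fun x => x * iteratedDeriv (n + 1) f x + (n + 1) * iteratedDeriv n f x := by
  have hderiv : ∀ m x, HasDerivAt (iteratedDeriv m f) (iteratedDeriv (m + 1) f x) x := fun m x => by
    rw [iteratedDeriv_succ]
    exact (hf.differentiable_iteratedDeriv m (mod_cast ENat.natCast_lt_top m) x).hasDerivAt
  induction n with
  | zero =>
    funext x
    simpa [add_comm] using ((hasDerivAt_id' x).fun_mul (hderiv 0 x)).deriv
  | succ n ih =>
    funext x
    rw [iteratedDeriv_succ, ih, (((hasDerivAt_id' x).fun_mul (hderiv (n + 1) x)).fun_add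
      ((hderiv n x).const_mul _)).deriv]
    push_cast
    ring

end Calculus

lemma isBigO_mul_exp_neg_mul_sq {b c : ℝ} (h : b < c) (l : Filter ℝ) :
    (fun x => x * exp (-c * x ^ 2)) =O[l] fun x => exp (-b * x ^ 2) := by
  have hδ : 0 < c - b := sub_pos.2 h
  refine IsBigO.of_bound (1 + (c - b)⁻¹) (Eventually.of_forall fun x => ?_)
  have hx : |x| ≤ (1 + (c - b)⁻¹) * exp ((c - b) * x ^ 2) := calc
    |x| ≤ 1 + x ^ 2 := by nlinarith [sq_abs x, sq_nonneg (|x| - 1)]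
    _ ≤ 1 + x ^ 2 + ((c - b)⁻¹ + (c - b) * x ^ 2) := le_add_of_nonneg_right (by positivity)
    _ = (1 + (c - b)⁻¹) * ((c - b) * x ^ 2 + 1) := by field_simp; ring
    _ ≤ (1 + (c - b)⁻¹) * exp ((c - b) * x ^ 2) := by gcongr; exact add_one_le_exp _
  calc ‖x * exp (-c * x ^ 2)‖ = |x| * exp (-c * x ^ 2) := by
        rw [norm_mul, norm_eq_abs, norm_eq_abs, abs_exp]
    _ ≤ (1 + (c - b)⁻¹) * exp ((c - b) * x ^ 2) * exp (-c * x ^ 2) := by gcongr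
    _ = (1 + (c - b)⁻¹) * ‖exp (-b * x ^ 2)‖ := by
        rw [mul_assoc, ← exp_add, norm_eq_abs, abs_exp]
        ring_nf

/-- The estimates defining `ℰ(κ)`, for a single function: Gaussian decay on `[0, ∞)` at every rate
below `κ`. The bound holds on all of `[0, ∞)`, hence the principal filter rather than `atTop`. -/
def GaussianDecay (κ : ℝ) (U : ℝ → ℝ) : Prop :=
  ∀ κ', 0 < κ' → κ' < κ → U =O[𝓟 (Set.Ici 0)] fun x => exp (-κ' * x ^ 2)

lemma gaussianDecay_iff {κ : ℝ} {U : ℝ → ℝ} :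
    GaussianDecay κ U ↔ ∀ κ', 0 < κ' → κ' < κ →
      ∃ C, ∀ x, 0 ≤ x → |U x| ≤ C * exp (-κ' * x ^ 2) := by
  simp only [GaussianDecay, isBigO_principal, Set.mem_Ici, norm_eq_abs, abs_exp]

namespace GaussianDecay

variable {κ : ℝ} {U V : ℝ → ℝ}

lemma exists_nonneg_bound (hU : GaussianDecay κ U) {κ' : ℝ} (h0 : 0 < κ') (h1 : κ' < κ) :
    ∃ C, 0 ≤ C ∧ ∀ x, 0 ≤ x → |U x| ≤ C * exp (-κ' * x ^ 2) := by
  obtain ⟨C, hC⟩ := gaussianDecay_iff.1 hU κ' h0 h1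
  exact ⟨C, by simpa using (abs_nonneg _).trans (hC 0 le_rfl), hC⟩

lemma add (hU : GaussianDecay κ U) (hV : GaussianDecay κ V) : GaussianDecay κ (U + V) :=
  fun κ' h0 h1 => (hU κ' h0 h1).add (hV κ' h0 h1)

lemma const_mul (hU : GaussianDecay κ U) (c : ℝ) : GaussianDecay κ fun x => c * U x :=
  fun κ' h0 h1 => (hU κ' h0 h1).const_mul_left c

lemma of_isBigO_mul_exp (h : ∀ κ', 0 < κ' → κ' < κ →
    U =O[𝓟 (Set.Ici 0)] fun x => x * exp (-κ' * x ^ 2)) : GaussianDecay κ U := by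
  intro κ' h0 h1
  obtain ⟨κ'', h2, h3⟩ := exists_between h1
  exact (h κ'' (h0.trans h2) h3).trans (isBigO_mul_exp_neg_mul_sq h2 _)

lemma id_mul (hU : GaussianDecay κ U) : GaussianDecay κ fun x => x * U x :=
  of_isBigO_mul_exp fun κ' h0 h1 => (isBigO_refl _ _).mul (hU κ' h0 h1)

lemma exp_neg_mul_sq {b : ℝ} (hκ : κ ≤ b) : GaussianDecay κ fun x => exp (-b * x ^ 2) := by
  refine gaussianDecay_iff.2 fun κ' _ h1 => ⟨1, fun x _ => ?_⟩
  have : κ' ≤ b := h1.le.trans hκ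
  rw [abs_exp, one_mul]
  gcongr

lemma tendsto_atTop_zero (hκ : 0 < κ) (hU : GaussianDecay κ U) : Tendsto U atTop (𝓝 0) := by
  obtain ⟨κ', h0, h1⟩ := exists_between hκ
  refine ((hU κ' h0 h1).mono (le_principal_iff.2 (Ici_mem_atTop 0))).trans_tendsto ?_
  exact tendsto_exp_atBot.comp
    ((tendsto_pow_atTop two_ne_zero).const_mul_atTop_of_neg (neg_lt_zero.2 h0))

lemma integrableOn_Ioi (hκ : 0 < κ) (hU : GaussianDecay κ U) (hc : Continuous U) :
    IntegrableOn U (Set.Ioi 0) := by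
  obtain ⟨κ', h0, h1⟩ := exists_between hκ
  obtain ⟨C, -, hC⟩ := hU.exists_nonneg_bound h0 h1
  refine Integrable.mono' ((integrable_exp_neg_mul_sq h0).integrableOn.const_mul C)
    hc.aestronglyMeasurable ?_
  exact (ae_restrict_mem measurableSet_Ioi).mono fun x hx => hC x (Set.mem_Ioi.1 hx).le

/-- For `κ' < κ''` and `s > x`, split off `exp (-κ'' s²) ≤ exp (-κ' x²) exp (-(κ'' - κ') s²)`; the
last factor is integrable. -/
lemma integral_Ioi (hU : GaussianDecay κ U) : GaussianDecay κ fun x => ∫ s in Set.Ioi x, U s := by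
  refine gaussianDecay_iff.2 fun κ' h0 h1 => ?_
  obtain ⟨κ'', h2, h3⟩ := exists_between h1
  obtain ⟨C, hC0, hC⟩ := hU.exists_nonneg_bound (h0.trans h2) h3
  have hint := integrable_exp_neg_mul_sq (sub_pos.2 h2)
  refine ⟨C * ∫ s, exp (-(κ'' - κ') * s ^ 2), fun x hx => ?_⟩
  have hbound : ∀ s ∈ Set.Ioi x,
      ‖U s‖ ≤ C * exp (-κ' * x ^ 2) * exp (-(κ'' - κ') * s ^ 2) := fun s hs => by
    have hxs : x < s := hs
    have hsq : κ' * x ^ 2 ≤ κ' * s ^ 2 := by gcongr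
    rw [mul_assoc, ← exp_add]
    refine (hC s (hx.trans hxs.le)).trans ?_
    gcongr
    linarith
  calc |∫ s in Set.Ioi x, U s|
      ≤ ∫ s in Set.Ioi x, C * exp (-κ' * x ^ 2) * exp (-(κ'' - κ') * s ^ 2) :=
        norm_integral_le_of_norm_le (hint.const_mul _).integrableOn
          ((ae_restrict_mem measurableSet_Ioi).mono hbound)
    _ = C * exp (-κ' * x ^ 2) * ∫ s in Set.Ioi x, exp (-(κ'' - κ') * s ^ 2) :=
        integral_const_mul _ _
    _ ≤ C * exp (-κ' * x ^ 2) * ∫ s, exp (-(κ'' - κ') * s ^ 2) := by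
        refine mul_le_mul_of_nonneg_left (setIntegral_le_integral hint ?_) (by positivity)
        exact Eventually.of_forall fun s => (exp_pos _).le
    _ = C * (∫ s, exp (-(κ'' - κ') * s ^ 2)) * exp (-κ' * x ^ 2) := by ring

lemma iteratedDeriv_id_mul (hU : ContDiff ℝ ∞ U) {n : ℕ}
    (h : ∀ m ≤ n, GaussianDecay κ (iteratedDeriv m U)) :
    GaussianDecay κ (iteratedDeriv n fun x => x * U x) := by
  cases n with
  | zero => simpa only [iteratedDeriv_zero] using (h 0 le_rfl).id_mul
  | succ n =>
    rw [iteratedDeriv_succ_id_mul hU]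
    exact (h _ le_rfl).id_mul.add ((h n n.le_succ).const_mul _)

end GaussianDecay

/-- `∫ s in ∞..x, V s`, the primitive of `V` vanishing at `+∞`. This form is differentiable as soon
as `V` is continuous; it represents the primitive only when `V` is integrable on `(0, ∞)`. -/
noncomputable def decayingPrimitive (V : ℝ → ℝ) (x : ℝ) : ℝ :=
  (∫ s in (0 : ℝ)..x, V s) - ∫ s in Set.Ioi 0, V s

lemma decayingPrimitive_zero (V : ℝ → ℝ) :
    decayingPrimitive V 0 = -∫ s in Set.Ioi 0, V s := by
  simp [decayingPrimitive]

lemma decayingPrimitive_of_nonneg {V : ℝ → ℝ} (hV : IntegrableOn V (Set.Ioi 0)) {x : ℝ}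
    (hx : 0 ≤ x) : decayingPrimitive V x = -∫ s in Set.Ioi x, V s := by
  rw [decayingPrimitive, ← intervalIntegral.integral_Ioi_sub_Ioi hV hx]
  ring

lemma hasDerivAt_decayingPrimitive {V : ℝ → ℝ} (hV : Continuous V) (x : ℝ) :
    HasDerivAt (decayingPrimitive V) (V x) x :=
  (hV.integral_hasStrictDerivAt 0 x).hasDerivAt.sub_const _

lemma deriv_decayingPrimitive {V : ℝ → ℝ} (hV : Continuous V) :
    deriv (decayingPrimitive V) = V :=
  funext fun x => (hasDerivAt_decayingPrimitive hV x).deriv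

lemma GaussianDecay.decayingPrimitive {κ : ℝ} (hκ : 0 < κ) {V : ℝ → ℝ} (hV : GaussianDecay κ V)
    (hc : Continuous V) : GaussianDecay κ (decayingPrimitive V) := fun κ' h0 h1 =>
  ((hV.integral_Ioi κ' h0 h1).neg_left).congr'
    (eventually_principal.2 fun _ hx =>
      (decayingPrimitive_of_nonneg (hV.integrableOn_Ioi hκ hc) hx).symm) EventuallyEq.rfl

lemma memGaussianClass_iff {κ : ℝ} {U : ℝ → ℝ} :
    MemGaussianClass κ U ↔ ContDiff ℝ ∞ U ∧ ∀ n, GaussianDecay κ (iteratedDeriv n U) := by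
  simp only [MemGaussianClass, gaussianDecay_iff]

namespace MemGaussianClass

variable {κ : ℝ} {U V : ℝ → ℝ}

lemma contDiff (hU : MemGaussianClass κ U) : ContDiff ℝ ∞ U := hU.1

lemma differentiable (hU : MemGaussianClass κ U) : Differentiable ℝ U :=
  (contDiff_infty_iff_deriv.1 hU.contDiff).1

lemma continuous (hU : MemGaussianClass κ U) : Continuous U := hU.contDiff.continuous

lemma decay_iteratedDeriv (hU : MemGaussianClass κ U) (n : ℕ) :
    GaussianDecay κ (iteratedDeriv n U) :=
  (memGaussianClass_iff.1 hU).2 n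

lemma decay (hU : MemGaussianClass κ U) : GaussianDecay κ U := by
  simpa only [iteratedDeriv_zero] using hU.decay_iteratedDeriv 0

lemma integrableOn_Ioi (hκ : 0 < κ) (hU : MemGaussianClass κ U) : IntegrableOn U (Set.Ioi 0) :=
  hU.decay.integrableOn_Ioi hκ hU.continuous

protected lemma deriv (hU : MemGaussianClass κ U) : MemGaussianClass κ (deriv U) :=
  memGaussianClass_iff.2 ⟨(contDiff_infty_iff_deriv.1 hU.contDiff).2, fun n => by
    simpa only [iteratedDeriv_succ'] using hU.decay_iteratedDeriv (n + 1)⟩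

lemma of_hasDerivAt (hU : GaussianDecay κ U) (hV : MemGaussianClass κ V)
    (h : ∀ x, HasDerivAt U (V x) x) : MemGaussianClass κ U := by
  refine memGaussianClass_iff.2 ⟨contDiff_infty_of_hasDerivAt h hV.contDiff, fun n => ?_⟩
  cases n with
  | zero => simpa only [iteratedDeriv_zero] using hU
  | succ n =>
    rw [iteratedDeriv_succ', funext fun x => (h x).deriv]
    exact hV.decay_iteratedDeriv n

lemma add (hU : MemGaussianClass κ U) (hV : MemGaussianClass κ V) : MemGaussianClass κ (U + V) := by
  refine memGaussianClass_iff.2 ⟨hU.contDiff.add hV.contDiff, fun n => ?_⟩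
  have h : iteratedDeriv n (U + V) = iteratedDeriv n U + iteratedDeriv n V := funext fun x =>
    iteratedDeriv_add (hU.contDiff.of_le (mod_cast le_top)).contDiffAt
      (hV.contDiff.of_le (mod_cast le_top)).contDiffAt
  rw [h]
  exact (hU.decay_iteratedDeriv n).add (hV.decay_iteratedDeriv n)

lemma const_mul (hU : MemGaussianClass κ U) (c : ℝ) : MemGaussianClass κ fun x => c * U x := by
  refine memGaussianClass_iff.2 ⟨contDiff_const.mul hU.contDiff, fun n => ?_⟩
  have h : iteratedDeriv n (fun x => c * U x) = fun x => c * iteratedDeriv n U x :=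
    funext fun x => iteratedDeriv_const_mul_field c U
  rw [h]
  exact (hU.decay_iteratedDeriv n).const_mul c

lemma id_mul (hU : MemGaussianClass κ U) : MemGaussianClass κ fun x => x * U x :=
  memGaussianClass_iff.2 ⟨contDiff_id.mul hU.contDiff, fun _ =>
    GaussianDecay.iteratedDeriv_id_mul hU.contDiff fun m _ => hU.decay_iteratedDeriv m⟩

protected lemma decayingPrimitive (hκ : 0 < κ) (hV : MemGaussianClass κ V) :
    MemGaussianClass κ (decayingPrimitive V) :=
  of_hasDerivAt (hV.decay.decayingPrimitive hκ hV.continuous) hV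
    (hasDerivAt_decayingPrimitive hV.continuous)

lemma eq_of_deriv_eq (hκ : 0 < κ) (hU : MemGaussianClass κ U) (hV : MemGaussianClass κ V)
    (h : deriv U = deriv V) : U = V :=
  eq_of_deriv_eq_of_tendsto_atTop hU.differentiable hV.differentiable h
    (hU.decay.tendsto_atTop_zero hκ) (hV.decay.tendsto_atTop_zero hκ)

/-- The equation expresses each derivative of `U` through `F` and lower derivatives of `U`, so the
decay of `U` alone propagates to all of its derivatives. -/
lemma of_deriv_eq_add_id_mul {F : ℝ → ℝ} {c : ℝ} (hF : MemGaussianClass κ F)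
    (hUs : ContDiff ℝ ∞ U) (hU : GaussianDecay κ U)
    (h : ∀ x, deriv U x = F x + c * (x * U x)) : MemGaussianClass κ U := by
  refine memGaussianClass_iff.2 ⟨hUs, fun n => ?_⟩
  induction n using Nat.strong_induction_on with
  | _ n ih =>
  cases n with
  | zero => simpa only [iteratedDeriv_zero] using hU
  | succ n =>
    have hxU : ContDiff ℝ n fun x => c * (x * U x) :=
      contDiff_const.mul (contDiff_id.mul (hUs.of_le (mod_cast le_top)))
    have hsucc : iteratedDeriv (n + 1) U =
        iteratedDeriv n F + fun x => c * iteratedDeriv n (fun y => y * U y) x := by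
      rw [iteratedDeriv_succ', funext h]
      funext x
      rw [iteratedDeriv_fun_add (hF.contDiff.of_le (mod_cast le_top)).contDiffAt hxU.contDiffAt,
        iteratedDeriv_const_mul_field]
      rfl
    rw [hsucc]
    exact (hF.decay_iteratedDeriv n).add
      ((GaussianDecay.iteratedDeriv_id_mul hUs fun m hm => ih m (Nat.lt_succ_of_le hm)).const_mul c)

end MemGaussianClass

/-- The solution of `U' + 2 b x U = F` with `U 0 = c`, by variation of constants. -/
noncomputable def firstOrderSolution (b : ℝ) (F : ℝ → ℝ) (c x : ℝ) : ℝ :=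
  exp (-b * x ^ 2) * (c + ∫ s in (0 : ℝ)..x, exp (b * s ^ 2) * F s)

section FirstOrder

variable {b κ : ℝ} {F : ℝ → ℝ}

lemma firstOrderSolution_zero (b : ℝ) (F : ℝ → ℝ) (c : ℝ) : firstOrderSolution b F c 0 = c := by
  simp [firstOrderSolution]

lemma firstOrderSolution_eq_add (b : ℝ) (F : ℝ → ℝ) (c : ℝ) :
    firstOrderSolution b F c = firstOrderSolution b F 0 + fun x => c * exp (-b * x ^ 2) := by
  funext x
  simp only [firstOrderSolution, Pi.add_apply]
  ring

lemma hasDerivAt_firstOrderSolution (hF : Continuous F) (c x : ℝ) :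
    HasDerivAt (firstOrderSolution b F c) (F x + -2 * b * (x * firstOrderSolution b F c x)) x := by
  have hexp : HasDerivAt (fun x => exp (-b * x ^ 2)) (exp (-b * x ^ 2) * (-b * (2 * x))) x := by
    simpa using ((hasDerivAt_pow 2 x).const_mul (-b)).exp
  have hint : HasDerivAt (fun x => c + ∫ s in (0 : ℝ)..x, exp (b * s ^ 2) * F s)
      (exp (b * x ^ 2) * F x) x :=
    (Continuous.integral_hasStrictDerivAt (by fun_prop) 0 x).hasDerivAt.const_add c
  have hcancel : exp (-b * x ^ 2) * exp (b * x ^ 2) = 1 := by simp [← exp_add]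
  refine (hexp.fun_mul hint).congr_deriv ?_
  simp only [firstOrderSolution]
  linear_combination F x * hcancel

lemma contDiff_firstOrderSolution (hF : ContDiff ℝ ∞ F) (c : ℝ) :
    ContDiff ℝ ∞ (firstOrderSolution b F c) := by
  have hg : ContDiff ℝ ∞ fun s => exp (b * s ^ 2) * F s := by fun_prop
  have hint : ContDiff ℝ ∞ fun x => ∫ s in (0 : ℝ)..x, exp (b * s ^ 2) * F s :=
    contDiff_infty_of_hasDerivAt
      (fun x => (hg.continuous.integral_hasStrictDerivAt 0 x).hasDerivAt) hg
  unfold firstOrderSolution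
  fun_prop

lemma GaussianDecay.firstOrderSolution_initial_zero (hκ : κ ≤ b) (hF : GaussianDecay κ F) :
    GaussianDecay κ (firstOrderSolution b F 0) := by
  refine GaussianDecay.of_isBigO_mul_exp fun κ' h0 h1 => isBigO_principal.2 ?_
  obtain ⟨C, hC0, hC⟩ := hF.exists_nonneg_bound h0 h1
  refine ⟨C, fun x (hx : 0 ≤ x) => ?_⟩
  have hκ'b : 0 ≤ b - κ' := by linarith
  have hbound : ∀ s ∈ Set.uIoc 0 x, ‖exp (b * s ^ 2) * F s‖ ≤ C * exp ((b - κ') * x ^ 2) := by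
    intro s hs
    obtain ⟨hs0, hsx⟩ := Set.uIoc_of_le hx ▸ hs
    calc ‖exp (b * s ^ 2) * F s‖ = exp (b * s ^ 2) * |F s| := by
          rw [norm_mul, norm_eq_abs, norm_eq_abs, abs_exp]
      _ ≤ exp (b * s ^ 2) * (C * exp (-κ' * s ^ 2)) := by gcongr; exact hC s hs0.le
      _ = C * exp ((b - κ') * s ^ 2) := by
          rw [mul_left_comm, ← exp_add]
          ring_nf
      _ ≤ C * exp ((b - κ') * x ^ 2) := by gcongr
  have hint : ‖∫ s in (0 : ℝ)..x, exp (b * s ^ 2) * F s‖ ≤ C * exp ((b - κ') * x ^ 2) * x := by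
    simpa [abs_of_nonneg hx] using intervalIntegral.norm_integral_le_of_norm_le_const hbound
  calc ‖firstOrderSolution b F 0 x‖
      = exp (-b * x ^ 2) * ‖∫ s in (0 : ℝ)..x, exp (b * s ^ 2) * F s‖ := by
        rw [firstOrderSolution, zero_add, norm_mul, norm_eq_abs, abs_exp]
    _ ≤ exp (-b * x ^ 2) * (C * exp ((b - κ') * x ^ 2) * x) := by gcongr
    _ = C * (x * (exp (-b * x ^ 2) * exp ((b - κ') * x ^ 2))) := by ring
    _ = C * (x * exp (-κ' * x ^ 2)) := by
        rw [← exp_add]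
        ring_nf
    _ = C * ‖x * exp (-κ' * x ^ 2)‖ := by rw [norm_of_nonneg (by positivity)]

lemma MemGaussianClass.firstOrderSolution (hκ : κ ≤ b) (hF : MemGaussianClass κ F) (c : ℝ) :
    MemGaussianClass κ (firstOrderSolution b F c) := by
  refine hF.of_deriv_eq_add_id_mul (contDiff_firstOrderSolution hF.contDiff c) ?_
    fun x => (hasDerivAt_firstOrderSolution hF.continuous c x).deriv
  rw [firstOrderSolution_eq_add]
  exact (hF.decay.firstOrderSolution_initial_zero hκ).add
    ((GaussianDecay.exp_neg_mul_sq hκ).const_mul c)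

lemma integral_firstOrderSolution (hκ0 : 0 < κ) (hκ : κ ≤ b) (hF : MemGaussianClass κ F) (c : ℝ) :
    ∫ x in Set.Ioi 0, firstOrderSolution b F c x =
      (∫ x in Set.Ioi 0, firstOrderSolution b F 0 x) + c * (√(π / b) / 2) := by
  rw [firstOrderSolution_eq_add, ← integral_gaussian_Ioi, ← integral_const_mul]
  exact integral_add ((hF.firstOrderSolution hκ 0).integrableOn_Ioi hκ0)
    ((integrable_exp_neg_mul_sq (hκ0.trans_le hκ)).integrableOn.const_mul c)

end FirstOrder

/-- The differential operator `U ↦ a U'' + 2 x U' - 2 μ U` of the model problem, which has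
`μ = k ∈ ℕ`. -/
noncomputable def modelOperator (a μ : ℝ) (U : ℝ → ℝ) (x : ℝ) : ℝ :=
  a * deriv (deriv U) x + 2 * x * deriv U x - 2 * μ * U x

/-- Solvability in `ℰ(κ)` of `modelOperator a μ U = F` with `U 0 = G`, for all `F ∈ ℰ(κ)` and
`G ∈ ℝ`. As functions in `ℰ(κ)` are realized on `ℝ`, so is the equation. -/
def DirichletSolvable (a κ μ : ℝ) : Prop :=
  ∀ ⦃F⦄, MemGaussianClass κ F → ∀ G : ℝ,
    ∃ U, MemGaussianClass κ U ∧ modelOperator a μ U = F ∧ U 0 = G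

/-- The analogue of `DirichletSolvable` for the boundary condition `U' 0 = G`. -/
def NeumannSolvable (a κ μ : ℝ) : Prop :=
  ∀ ⦃F⦄, MemGaussianClass κ F → ∀ G : ℝ,
    ∃ U, MemGaussianClass κ U ∧ modelOperator a μ U = F ∧ deriv U 0 = G

section ModelProblem

variable {a κ μ : ℝ} {F U V : ℝ → ℝ}

lemma MemGaussianClass.modelOperator (hU : MemGaussianClass κ U) (a μ : ℝ) :
    MemGaussianClass κ (modelOperator a μ U) := by
  convert! ((hU.deriv.deriv.const_mul a).add (hU.deriv.id_mul.const_mul 2)).add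
    (hU.const_mul (-(2 * μ))) using 1
  funext x
  simp only [_root_.modelOperator, Pi.add_apply]
  ring

lemma deriv_modelOperator_add_one (hU : ContDiff ℝ ∞ U) (a μ : ℝ) :
    deriv (modelOperator a (μ + 1) U) = modelOperator a μ (deriv U) := by
  obtain ⟨hd0, hU1⟩ := contDiff_infty_iff_deriv.1 hU
  obtain ⟨hd1, hU2⟩ := contDiff_infty_iff_deriv.1 hU1
  have hd2 := (contDiff_infty_iff_deriv.1 hU2).1
  funext x
  have h := (((hd2 x).hasDerivAt.const_mul a).fun_add
    (((hasDerivAt_id' x).const_mul 2).fun_mul (hd1 x).hasDerivAt)).fun_sub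
    ((hd0 x).hasDerivAt.const_mul (2 * (μ + 1)))
  refine h.deriv.trans ?_
  simp only [modelOperator]
  ring

lemma modelOperator_add_one_decayingPrimitive (hκ : 0 < κ) (hF : MemGaussianClass κ F)
    (hV : MemGaussianClass κ V) (h : modelOperator a μ V = deriv F) :
    modelOperator a (μ + 1) (decayingPrimitive V) = F := by
  have hU := hV.decayingPrimitive hκ
  refine (hU.modelOperator a (μ + 1)).eq_of_deriv_eq hκ hF ?_
  rw [deriv_modelOperator_add_one hU.contDiff, deriv_decayingPrimitive hV.continuous, h]

lemma modelOperator_zero_decayingPrimitive (ha : a ≠ 0) (hF : Continuous F) (c : ℝ) :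
    modelOperator a 0
      (decayingPrimitive (firstOrderSolution (1 / a) (fun x => 1 / a * F x) c)) = F := by
  have hderiv := hasDerivAt_firstOrderSolution (b := 1 / a) (hF.const_mul (1 / a)) c
  have hcont := continuous_iff_continuousAt.2 fun x => (hderiv x).continuousAt
  funext x
  rw [modelOperator, deriv_decayingPrimitive hcont, (hderiv x).deriv]
  field_simp
  ring

lemma neumannSolvable_zero (ha : 0 < a) (hκ0 : 0 < κ) (hκ : κ ≤ 1 / a) :
    NeumannSolvable a κ 0 := by
  intro F hF G
  have hV := (hF.const_mul (1 / a)).firstOrderSolution hκ G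
  refine ⟨_, hV.decayingPrimitive hκ0,
    modelOperator_zero_decayingPrimitive ha.ne' hF.continuous G, ?_⟩
  rw [deriv_decayingPrimitive hV.continuous, firstOrderSolution_zero]

lemma dirichletSolvable_zero (ha : 0 < a) (hκ0 : 0 < κ) (hκ : κ ≤ 1 / a) :
    DirichletSolvable a κ 0 := by
  intro F hF G
  have hf := hF.const_mul (1 / a)
  set I := ∫ x in Set.Ioi 0, firstOrderSolution (1 / a) (fun x => 1 / a * F x) 0 x with hI
  have hgauss : √(π / (1 / a)) / 2 ≠ 0 := by positivity
  refine ⟨_, (hf.firstOrderSolution hκ (-(G + I) / (√(π / (1 / a)) / 2))).decayingPrimitive hκ0,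
    modelOperator_zero_decayingPrimitive ha.ne' hF.continuous _, ?_⟩
  rw [decayingPrimitive_zero, integral_firstOrderSolution hκ0 hκ hf, ← hI,
    div_mul_cancel₀ _ hgauss]
  ring

lemma DirichletSolvable.neumannSolvable_add_one (hκ : 0 < κ) (h : DirichletSolvable a κ μ) :
    NeumannSolvable a κ (μ + 1) := by
  intro F hF G
  obtain ⟨V, hV, hLV, hV0⟩ := h hF.deriv G
  exact ⟨decayingPrimitive V, hV.decayingPrimitive hκ,
    modelOperator_add_one_decayingPrimitive hκ hF hV hLV,
    by rw [deriv_decayingPrimitive hV.continuous, hV0]⟩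

lemma NeumannSolvable.dirichletSolvable_add_one (ha : a ≠ 0) (hκ : 0 < κ) (hμ : μ + 1 ≠ 0)
    (h : NeumannSolvable a κ μ) : DirichletSolvable a κ (μ + 1) := by
  intro F hF G
  obtain ⟨V, hV, hLV, hV0⟩ := h hF.deriv ((F 0 + 2 * (μ + 1) * G) / a)
  have hLU := modelOperator_add_one_decayingPrimitive hκ hF hV hLV
  refine ⟨decayingPrimitive V, hV.decayingPrimitive hκ, hLU, ?_⟩
  have hLU0 := congrFun hLU 0
  rw [modelOperator, deriv_decayingPrimitive hV.continuous, hV0, mul_div_cancel₀ _ ha] at hLU0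
  refine mul_left_cancel₀ hμ ?_
  linarith

lemma dirichletSolvable_and_neumannSolvable_natCast (ha : 0 < a) (hκ0 : 0 < κ) (hκ : κ ≤ 1 / a)
    (k : ℕ) : DirichletSolvable a κ k ∧ NeumannSolvable a κ k := by
  induction k with
  | zero =>
    rw [Nat.cast_zero]
    exact ⟨dirichletSolvable_zero ha hκ0 hκ, neumannSolvable_zero ha hκ0 hκ⟩
  | succ k ih =>
    rw [Nat.cast_succ]
    exact ⟨ih.2.dirichletSolvable_add_one ha.ne' hκ0 k.cast_add_one_ne_zero,
      ih.1.neumannSolvable_add_one hκ0⟩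

end ModelProblem

/-- Dirichlet half-line model problem: Let `a > 0`, `0 < κ ≤ 1/a`,
`k ∈ ℕ`, `G ∈ ℝ`, and `F ∈ ℰ(κ)`. Then there exists `U ∈ ℰ(κ)` with
`a U''(ν) + 2ν U'(ν) − 2k U(ν) = −4 F(ν)` for all `ν ≥ 0` and `U(0) = G`. -/
theorem zaremba_dirichlet_model_problem
    (a κ : ℝ) (ha : 0 < a) (hκ0 : 0 < κ) (hκ : κ ≤ 1 / a)
    (k : ℕ) (G : ℝ) (F : ℝ → ℝ) (hF : MemGaussianClass κ F) :
    ∃ U : ℝ → ℝ, MemGaussianClass κ U ∧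
      (∀ ν : ℝ, 0 ≤ ν →
        a * deriv (deriv U) ν + 2 * ν * deriv U ν - 2 * (k : ℝ) * U ν = -4 * F ν) ∧
      U 0 = G := by
  obtain ⟨U, hU, hLU, hU0⟩ :=
    (dirichletSolvable_and_neumannSolvable_natCast ha hκ0 hκ k).1 (hF.const_mul (-4)) G
  exact ⟨U, hU, fun ν _ => congrFun hLU ν, hU0⟩
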